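/- Sphere case Γ = sin. Assume c ≠ 0 and μ > 0. Let s : [0,∞) → (−π,π) be continuous on [0,∞), twice differentiable on (0,∞), not identically zero, solving the reduced radial equation (4.24): s″(a) + s′(a)/a − μ sin(s(a)) + V′(s(a))/a² = 0 on (0,∞), with s(0) = 0 and lim_{a→0⁺} a s′(a) = 0. Then s(a) ≠ 0 for every a > 0, and liminf_{a→∞} |s(a)| > 0. -/

import Mathlib

open Set Filter

/-- `F(s) = 1 − cos s` (sphere case). -/
noncomputable def Fsph (s : ℝ) : ℝ := 1 - Real.cos s

/-- `G(s) = (k²/2) sin²s + b k F(s) − k² F(s)²` (sphere case). -/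
noncomputable def Gsph (k b : ℝ) (s : ℝ) : ℝ :=
  k ^ 2 / 2 * (Real.sin s) ^ 2 + b * k * Fsph s - k ^ 2 * (Fsph s) ^ 2

/-- `P(s) = (1 − cos s)/(1 + cos s)` (sphere case). -/
noncomputable def Psph (s : ℝ) : ℝ := (1 - Real.cos s) / (1 + Real.cos s)

/-- `V(s) = G(s) + (c²/2) P(s)` (sphere case). -/
noncomputable def Vsph (k b c : ℝ) (s : ℝ) : ℝ := Gsph k b s + c ^ 2 / 2 * Psph s

/-!
Write the equation as `s″ + s′/a − U′(s) + V′(s)/a² = 0` with `U = μ (1 − cos)`. The energy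
`E = (a s′)²/2 + V(s) − a² U(s)` satisfies `E′ = −2 a U(s) ≤ 0` and tends to `0` at `0⁺`, so
`E ≤ 0`, with `E < 0` wherever `s ≠ 0`. At a zero of `s` one has `E ≥ 0`, hence also `E ≥ 0` and
`s = 0` before it; and `E ≤ 0` together with `V ≥ −C U` gives `|s′| ≤ K |s|` away from `a = 0`, so
`s` vanishes after it too.

For a solution without zeros, `V ≥ −C U` turns `E ≤ E(1) < 0` into `a² U(s) ≥ const`, hence
`E′ ≤ −κ/a` and `E → −∞`. If `V ≥ −D`, then `(E + D)/a²` is nonincreasing as well; once it is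
negative, it stays below some `−η < 0`, while `(1 + C) U(s) ≥ −E/a² ≥ −(E + D)/a²`. Hence `U(s)`
stays away from `0`, and so does `s`.
-/

open Topology

/-- The hypotheses on the potentials of `s″ + s′/a − U′(s) + V′(s)/a² = 0` for solutions with values
in `J`: `U` has a strict minimum at `0`, of order at least two (constant `A`), and the negative part
of `V` is dominated by `U` (constant `C`). The sphere case is `U = μ F`, `V = Vsph k b c`,
`J = (−π, π)`. -/
structure AdmissiblePotentials (U V : ℝ → ℝ) (J : Set ℝ) (A C : ℝ) : Prop where
  isBounded : Bornology.IsBounded J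
  zero_mem : 0 ∈ J
  differentiableAt_U : ∀ x ∈ J, DifferentiableAt ℝ U x
  differentiableAt_V : ∀ x ∈ J, DifferentiableAt ℝ V x
  U_zero : U 0 = 0
  V_zero : V 0 = 0
  U_pos : ∀ x ∈ J, x ≠ 0 → 0 < U x
  U_le_mul_sq : ∀ x ∈ J, U x ≤ A * x ^ 2
  C_nonneg : 0 ≤ C
  neg_mul_U_le_V : ∀ x ∈ J, -(C * U x) ≤ V x

/-- `s` takes values in `J` and solves `s″ + s′/a − U′(s) + V′(s)/a² = 0` on `(0, ∞)`; nothing is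
said about its values on `(-∞, 0]`. -/
structure IsRadialSolution (U V : ℝ → ℝ) (J : Set ℝ) (s : ℝ → ℝ) : Prop where
  mem : ∀ a > 0, s a ∈ J
  differentiableAt : ∀ a > 0, DifferentiableAt ℝ s a
  differentiableAt_deriv : ∀ a > 0, DifferentiableAt ℝ (deriv s) a
  equation : ∀ a > 0,
    deriv (deriv s) a + deriv s a / a - deriv U (s a) + deriv V (s a) / a ^ 2 = 0

/-- The energy of a solution in the logarithmic variable `log a`, which is a Lyapunov function. -/
noncomputable def radialEnergy (U V s : ℝ → ℝ) (a : ℝ) : ℝ :=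
  (a * deriv s a) ^ 2 / 2 + V (s a) - a ^ 2 * U (s a)

namespace AdmissiblePotentials

variable {U V s : ℝ → ℝ} {J : Set ℝ} {A C : ℝ}

lemma U_nonneg (hP : AdmissiblePotentials U V J A C) {x : ℝ} (hx : x ∈ J) : 0 ≤ U x := by
  rcases eq_or_ne x 0 with rfl | hx0
  · exact hP.U_zero.ge
  · exact (hP.U_pos x hx hx0).le

lemma exists_forall_neg_le_V (hP : AdmissiblePotentials U V J A C) :
    ∃ D, 0 ≤ D ∧ ∀ x ∈ J, -D ≤ V x := by
  obtain ⟨R, hR⟩ := hP.isBounded.exists_norm_le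
  have hC := hP.C_nonneg
  refine ⟨C * (|A| * R ^ 2), by positivity, fun x hx => ?_⟩
  have hU : U x ≤ |A| * R ^ 2 := calc
    U x ≤ A * x ^ 2 := hP.U_le_mul_sq x hx
    _ ≤ |A| * x ^ 2 := by gcongr; exact le_abs_self A
    _ ≤ |A| * R ^ 2 := by
      gcongr 1
      exact sq_le_sq.2 ((hR x hx).trans (le_abs_self R))
  exact (neg_le_neg (mul_le_mul_of_nonneg_left hU hC)).trans (hP.neg_mul_U_le_V x hx)

lemma tendsto_radialEnergy_zero (hP : AdmissiblePotentials U V J A C)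
    (hs0 : Tendsto s (𝓝[>] 0) (𝓝 0))
    (hlim : Tendsto (fun a => a * deriv s a) (𝓝[>] 0) (𝓝 0)) :
    Tendsto (radialEnergy U V s) (𝓝[>] 0) (𝓝 0) := by
  have hU := (hP.differentiableAt_U 0 hP.zero_mem).continuousAt.tendsto.comp hs0
  have hV := (hP.differentiableAt_V 0 hP.zero_mem).continuousAt.tendsto.comp hs0
  have ha : Tendsto (fun a : ℝ => a) (𝓝[>] 0) (𝓝 0) := nhdsWithin_le_nhds
  unfold radialEnergy
  simpa [hP.U_zero, hP.V_zero] using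
    (((hlim.pow 2).div_const 2).add hV).sub ((ha.pow 2).mul hU)

lemma sq_mul_deriv_div_two_le (hP : AdmissiblePotentials U V J A C) {a : ℝ} (ha : s a ∈ J) :
    (a * deriv s a) ^ 2 / 2 ≤ radialEnergy U V s a + (a ^ 2 + C) * U (s a) := by
  have := hP.neg_mul_U_le_V (s a) ha
  unfold radialEnergy
  linarith

lemma neg_radialEnergy_div_sq_le (hP : AdmissiblePotentials U V J A C) {a : ℝ} (ha : s a ∈ J)
    (h1 : 1 ≤ a) : -radialEnergy U V s a / a ^ 2 ≤ (1 + C) * U (s a) := by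
  have hCU : 0 ≤ C * U (s a) := mul_nonneg hP.C_nonneg (hP.U_nonneg ha)
  have hE := hP.sq_mul_deriv_div_two_le ha
  rw [div_le_iff₀ (by positivity)]
  calc -radialEnergy U V s a
      ≤ a ^ 2 * U (s a) + 1 * (C * U (s a)) := by linarith [sq_nonneg (a * deriv s a)]
    _ ≤ a ^ 2 * U (s a) + a ^ 2 * (C * U (s a)) := by gcongr; exact one_le_pow₀ h1
    _ = (1 + C) * U (s a) * a ^ 2 := by ring

end AdmissiblePotentials

namespace IsRadialSolution

variable {U V s : ℝ → ℝ} {J : Set ℝ} {A C D : ℝ}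

lemma hasDerivAt_radialEnergy (hS : IsRadialSolution U V J s) {a : ℝ} (ha : 0 < a)
    (hU : DifferentiableAt ℝ U (s a)) (hV : DifferentiableAt ℝ V (s a)) :
    HasDerivAt (radialEnergy U V s) (-(2 * a * U (s a))) a := by
  have hs := (hS.differentiableAt a ha).hasDerivAt
  have hs' := (hS.differentiableAt_deriv a ha).hasDerivAt
  have hkin := (((hasDerivAt_id a).mul hs').pow 2).div_const 2
  have hpot := ((hasDerivAt_id a).pow 2).mul (hU.hasDerivAt.comp a hs)
  refine ((hkin.add (hV.hasDerivAt.comp a hs)).sub hpot).congr_deriv ?_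
  have heq : deriv (deriv s) a = deriv U (s a) - deriv V (s a) / a ^ 2 - deriv s a / a := by
    linarith [hS.equation a ha]
  simp only [Nat.cast_ofNat, Pi.mul_apply, id_eq, Nat.add_one_sub_one, pow_one, one_mul, heq,
    mul_one, Function.comp_apply, Pi.pow_apply]
  field_simp
  ring

lemma hasDerivAt_radialEnergy_add_div_sq (hS : IsRadialSolution U V J s) {a : ℝ} (ha : 0 < a)
    (hU : DifferentiableAt ℝ U (s a)) (hV : DifferentiableAt ℝ V (s a)) :
    HasDerivAt (fun x => (radialEnergy U V s x + D) / x ^ 2)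
      (-(deriv s a ^ 2 / a + 2 * (V (s a) + D) / a ^ 3)) a := by
  have hE := (hS.hasDerivAt_radialEnergy ha hU hV).add_const D
  refine (hE.div (hasDerivAt_pow 2 a) (by positivity)).congr_deriv ?_
  simp only [radialEnergy, Nat.cast_ofNat, Nat.add_one_sub_one, pow_one]
  field_simp
  ring

lemma antitoneOn_radialEnergy (hS : IsRadialSolution U V J s)
    (hP : AdmissiblePotentials U V J A C) : AntitoneOn (radialEnergy U V s) (Ioi 0) := by
  have hderiv : ∀ a ∈ Ioi (0 : ℝ), HasDerivAt (radialEnergy U V s) (-(2 * a * U (s a))) a :=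
    fun a ha => hS.hasDerivAt_radialEnergy ha (hP.differentiableAt_U _ (hS.mem a ha))
      (hP.differentiableAt_V _ (hS.mem a ha))
  refine antitoneOn_of_hasDerivWithinAt_nonpos (convex_Ioi 0)
    (fun a ha => (hderiv a ha).continuousAt.continuousWithinAt)
    (fun a ha => (hderiv a (interior_subset ha)).hasDerivWithinAt) fun a ha => ?_
  have ha0 : 0 < a := interior_subset ha
  have := hP.U_nonneg (hS.mem a ha0)
  exact neg_nonpos.2 (by positivity)

lemma antitoneOn_radialEnergy_add_div_sq (hS : IsRadialSolution U V J s)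
    (hP : AdmissiblePotentials U V J A C) (hD : ∀ x ∈ J, -D ≤ V x) :
    AntitoneOn (fun a => (radialEnergy U V s a + D) / a ^ 2) (Ioi 0) := by
  have hderiv : ∀ a ∈ Ioi (0 : ℝ), HasDerivAt (fun x => (radialEnergy U V s x + D) / x ^ 2)
      (-(deriv s a ^ 2 / a + 2 * (V (s a) + D) / a ^ 3)) a :=
    fun a ha => hS.hasDerivAt_radialEnergy_add_div_sq ha
      (hP.differentiableAt_U _ (hS.mem a ha)) (hP.differentiableAt_V _ (hS.mem a ha))
  refine antitoneOn_of_hasDerivWithinAt_nonpos (convex_Ioi 0)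
    (fun a ha => (hderiv a ha).continuousAt.continuousWithinAt)
    (fun a ha => (hderiv a (interior_subset ha)).hasDerivWithinAt) fun a ha => ?_
  have ha0 : 0 < a := interior_subset ha
  have : 0 ≤ V (s a) + D := neg_le_iff_add_nonneg.1 (hD _ (hS.mem a ha0))
  exact neg_nonpos.2 (by positivity)

lemma radialEnergy_nonpos (hS : IsRadialSolution U V J s) (hP : AdmissiblePotentials U V J A C)
    (hE0 : Tendsto (radialEnergy U V s) (𝓝[>] 0) (𝓝 0)) {a : ℝ} (ha : 0 < a) :
    radialEnergy U V s a ≤ 0 := by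
  refine ge_of_tendsto hE0 ?_
  filter_upwards [Ioo_mem_nhdsGT ha] with x hx
  exact hS.antitoneOn_radialEnergy hP hx.1 ha hx.2.le

lemma radialEnergy_neg (hS : IsRadialSolution U V J s) (hP : AdmissiblePotentials U V J A C)
    (hE0 : Tendsto (radialEnergy U V s) (𝓝[>] 0) (𝓝 0)) {a : ℝ} (ha : 0 < a) (hsa : s a ≠ 0) :
    radialEnergy U V s a < 0 := by
  refine (hS.radialEnergy_nonpos hP hE0 ha).lt_of_ne fun hEa => ?_
  have hmax : IsLocalMax (radialEnergy U V s) a := by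
    filter_upwards [Ioi_mem_nhds ha] with x hx
    exact (hS.radialEnergy_nonpos hP hE0 hx).trans hEa.ge
  have hzero := hmax.hasDerivAt_eq_zero <| hS.hasDerivAt_radialEnergy ha
    (hP.differentiableAt_U _ (hS.mem a ha)) (hP.differentiableAt_V _ (hS.mem a ha))
  have := hP.U_pos _ (hS.mem a ha) hsa
  exact (neg_neg_of_pos (by positivity : 0 < 2 * a * U (s a))).ne hzero

lemma abs_deriv_le (hS : IsRadialSolution U V J s) (hP : AdmissiblePotentials U V J A C)
    (hE0 : Tendsto (radialEnergy U V s) (𝓝[>] 0) (𝓝 0)) {a x : ℝ} (ha : 0 < a) (hax : a ≤ x) :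
    |deriv s x| ≤ √(2 * (1 + C / a ^ 2) * A) * |s x| := by
  have hx : 0 < x := ha.trans_le hax
  have hC := hP.C_nonneg
  have hU := hP.U_nonneg (hS.mem x hx)
  have hCx : C ≤ C / a ^ 2 * x ^ 2 := by
    rw [div_mul_eq_mul_div, le_div_iff₀ (by positivity)]
    gcongr
  have hsq : deriv s x ^ 2 ≤ 2 * (1 + C / a ^ 2) * A * s x ^ 2 := by
    refine le_of_mul_le_mul_left ?_ (by positivity : 0 < x ^ 2)
    calc x ^ 2 * deriv s x ^ 2 = 2 * ((x * deriv s x) ^ 2 / 2) := by ring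
      _ ≤ 2 * ((x ^ 2 + C) * U (s x)) := by
        linarith [hP.sq_mul_deriv_div_two_le (hS.mem x hx), hS.radialEnergy_nonpos hP hE0 hx]
      _ ≤ 2 * ((x ^ 2 + C / a ^ 2 * x ^ 2) * (A * s x ^ 2)) := by
        gcongr
        exact hP.U_le_mul_sq _ (hS.mem x hx)
      _ = x ^ 2 * (2 * (1 + C / a ^ 2) * A * s x ^ 2) := by ring
  calc |deriv s x| ≤ √(2 * (1 + C / a ^ 2) * A * s x ^ 2) := Real.abs_le_sqrt hsq
    _ = √(2 * (1 + C / a ^ 2) * A) * |s x| := by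
      rw [Real.sqrt_mul' _ (sq_nonneg _), Real.sqrt_sq_eq_abs]

lemma eq_zero_of_le (hS : IsRadialSolution U V J s) (hP : AdmissiblePotentials U V J A C)
    (hE0 : Tendsto (radialEnergy U V s) (𝓝[>] 0) (𝓝 0)) {a x : ℝ} (ha : 0 < a) (hsa : s a = 0)
    (hax : a ≤ x) : s x = 0 :=
  eq_zero_of_abs_deriv_le_mul_abs_self_of_eq_zero_right
    (fun y hy => (hS.differentiableAt y (ha.trans_le hy.1)).continuousAt.continuousWithinAt)
    (fun y hy => (hS.differentiableAt y (ha.trans_le hy.1)).hasDerivAt.hasDerivWithinAt) hsa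
    (fun _ hy => hS.abs_deriv_le hP hE0 ha hy.1) x (right_mem_Icc.2 hax)

lemma ne_zero (hS : IsRadialSolution U V J s) (hP : AdmissiblePotentials U V J A C)
    (hE0 : Tendsto (radialEnergy U V s) (𝓝[>] 0) (𝓝 0)) (hne : ∃ a > 0, s a ≠ 0) {a : ℝ}
    (ha : 0 < a) : s a ≠ 0 := by
  intro hsa
  obtain ⟨p, hp, hsp⟩ := hne
  rcases le_total p a with hpa | hap
  · have hEa : 0 ≤ radialEnergy U V s a := by
      simp only [radialEnergy, hsa, hP.U_zero, hP.V_zero, mul_zero, add_zero, sub_zero]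
      positivity
    exact (hS.radialEnergy_neg hP hE0 hp hsp).not_ge
      (hEa.trans (hS.antitoneOn_radialEnergy hP hp ha hpa))
  · exact hsp (hS.eq_zero_of_le hP hE0 ha hsa hap)

lemma radialEnergy_le_sub_log (hS : IsRadialSolution U V J s)
    (hP : AdmissiblePotentials U V J A C) {a : ℝ} (ha : 1 ≤ a) :
    radialEnergy U V s a ≤
      radialEnergy U V s 1 - 2 * -radialEnergy U V s 1 / (1 + C) * Real.log a := by
  set κ := 2 * -radialEnergy U V s 1 / (1 + C) with hκ
  have hC : 0 < 1 + C := by linarith [hP.C_nonneg]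
  have hderiv : ∀ x ∈ Ici (1 : ℝ), HasDerivAt (fun x => radialEnergy U V s x + κ * Real.log x)
      (-(2 * x * U (s x)) + κ * x⁻¹) x := fun x hx => by
    have hx0 : 0 < x := one_pos.trans_le hx
    exact (hS.hasDerivAt_radialEnergy hx0 (hP.differentiableAt_U _ (hS.mem x hx0))
      (hP.differentiableAt_V _ (hS.mem x hx0))).add ((Real.hasDerivAt_log hx0.ne').const_mul κ)
  have hanti : AntitoneOn (fun x => radialEnergy U V s x + κ * Real.log x) (Ici 1) := by
    refine antitoneOn_of_hasDerivWithinAt_nonpos (convex_Ici 1)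
      (fun x hx => (hderiv x hx).continuousAt.continuousWithinAt)
      (fun x hx => (hderiv x (interior_subset hx)).hasDerivWithinAt) fun x hx => ?_
    have hx1 : 1 ≤ x := interior_subset hx
    have hx0 : 0 < x := one_pos.trans_le hx1
    have hE : -radialEnergy U V s 1 / x ^ 2 ≤ (1 + C) * U (s x) := calc
      -radialEnergy U V s 1 / x ^ 2 ≤ -radialEnergy U V s x / x ^ 2 := by
        gcongr
        exact hS.antitoneOn_radialEnergy hP (mem_Ioi.2 one_pos) hx0 hx1
      _ ≤ _ := hP.neg_radialEnergy_div_sq_le (hS.mem x hx0) hx1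
    have hκx : κ * x⁻¹ = 2 * x * (-radialEnergy U V s 1 / x ^ 2 / (1 + C)) := by
      rw [hκ]
      field_simp
    rw [hκx, neg_add_nonpos_iff]
    gcongr
    exact (div_le_iff₀' hC).2 hE
  have := hanti self_mem_Ici ha ha
  simp only [Real.log_one, mul_zero, add_zero] at this
  linarith

lemma tendsto_radialEnergy_atBot (hS : IsRadialSolution U V J s)
    (hP : AdmissiblePotentials U V J A C) (hE1 : radialEnergy U V s 1 < 0) :
    Tendsto (radialEnergy U V s) atTop atBot := by
  have hκ : 0 < 2 * -radialEnergy U V s 1 / (1 + C) :=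
    div_pos (by linarith) (by linarith [hP.C_nonneg])
  refine tendsto_atBot_mono' atTop
    ((eventually_ge_atTop 1).mono fun a ha => hS.radialEnergy_le_sub_log hP ha) ?_
  simp only [sub_eq_add_neg]
  exact tendsto_atBot_add_const_left _ _
    (tendsto_neg_atTop_atBot.comp (Real.tendsto_log_atTop.const_mul_atTop hκ))

lemma exists_eventually_le_potential (hS : IsRadialSolution U V J s)
    (hP : AdmissiblePotentials U V J A C) (hE1 : radialEnergy U V s 1 < 0) :
    ∃ η > 0, ∀ᶠ a in atTop, η ≤ U (s a) := by
  obtain ⟨D, hD0, hD⟩ := hP.exists_forall_neg_le_V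
  obtain ⟨p, hpD, hp1⟩ := (((hS.tendsto_radialEnergy_atBot hP hE1).eventually_lt_atBot (-D)).and
    (eventually_ge_atTop 1)).exists
  have hp0 : 0 < p := one_pos.trans_le hp1
  have hC : 0 < 1 + C := by linarith [hP.C_nonneg]
  have hpneg : 0 < -((radialEnergy U V s p + D) / p ^ 2) :=
    neg_pos.2 (div_neg_of_neg_of_pos (by linarith) (by positivity))
  refine ⟨-((radialEnergy U V s p + D) / p ^ 2) / (1 + C), div_pos hpneg hC, ?_⟩
  filter_upwards [eventually_ge_atTop p] with a ha
  have ha0 : 0 < a := hp0.trans_le ha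
  rw [div_le_iff₀' hC]
  calc -((radialEnergy U V s p + D) / p ^ 2)
      ≤ -((radialEnergy U V s a + D) / a ^ 2) :=
        neg_le_neg (hS.antitoneOn_radialEnergy_add_div_sq hP hD hp0 ha0 ha)
    _ ≤ -radialEnergy U V s a / a ^ 2 := by
        rw [← neg_div]
        gcongr
        linarith
    _ ≤ (1 + C) * U (s a) := hP.neg_radialEnergy_div_sq_le (hS.mem a ha0) (hp1.trans ha)

lemma exists_eventually_le_abs (hS : IsRadialSolution U V J s)
    (hP : AdmissiblePotentials U V J A C) (hE1 : radialEnergy U V s 1 < 0) :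
    ∃ ε > 0, ∀ᶠ a in atTop, ε ≤ |s a| := by
  obtain ⟨η, hη, hUη⟩ := hS.exists_eventually_le_potential hP hE1
  have hU0 : ∀ᶠ x in 𝓝 0, U x < η :=
    (hP.differentiableAt_U 0 hP.zero_mem).continuousAt.eventually_lt_const
      (hP.U_zero.trans_lt hη)
  obtain ⟨ε, hε, hball⟩ := Metric.eventually_nhds_iff.1 hU0
  refine ⟨ε, hε, hUη.mono fun a ha => le_of_not_gt fun hlt => ha.not_gt (hball ?_)⟩
  rwa [Real.dist_0_eq_abs]

lemma isBoundedUnder_abs (hS : IsRadialSolution U V J s) (hJ : Bornology.IsBounded J) :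
    IsBoundedUnder (· ≤ ·) atTop fun a => |s a| := by
  obtain ⟨R, hR⟩ := hJ.exists_norm_le
  exact ⟨R, eventually_map.2 ((eventually_gt_atTop 0).mono fun a ha => hR _ (hS.mem a ha))⟩

end IsRadialSolution

section Sphere

variable {x : ℝ}

lemma one_add_cos_pos_of_mem_Ioo (hx : x ∈ Ioo (-Real.pi) Real.pi) : 0 < 1 + Real.cos x := by
  have h := Real.cos_lt_cos_of_nonneg_of_le_pi (abs_nonneg x) le_rfl (abs_lt.2 hx)
  rw [Real.cos_abs, Real.cos_pi] at h
  linarith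

lemma Fsph_pos_of_mem_Ioo (hx : x ∈ Ioo (-Real.pi) Real.pi) (hx0 : x ≠ 0) : 0 < Fsph x := by
  have h := Real.cos_lt_cos_of_nonneg_of_le_pi le_rfl (abs_lt.2 hx).le (abs_pos.2 hx0)
  rw [Real.cos_abs, Real.cos_zero] at h
  exact sub_pos.2 h

lemma differentiableAt_Fsph : DifferentiableAt ℝ Fsph x := by
  unfold Fsph
  fun_prop

lemma deriv_Fsph : deriv Fsph x = Real.sin x := by
  unfold Fsph
  simp

lemma differentiableAt_Vsph (k b c : ℝ) (hx : x ∈ Ioo (-Real.pi) Real.pi) :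
    DifferentiableAt ℝ (Vsph k b c) x := by
  have := (one_add_cos_pos_of_mem_Ioo hx).ne'
  unfold Vsph Gsph Psph Fsph
  fun_prop (disch := assumption)

lemma neg_mul_Fsph_le_Vsph (k b c : ℝ) (hx : x ∈ Ioo (-Real.pi) Real.pi) :
    -((|b * k| + 2 * k ^ 2) * Fsph x) ≤ Vsph k b c x := by
  have hpos := one_add_cos_pos_of_mem_Ioo hx
  have hF : 0 ≤ Fsph x := sub_nonneg.2 (Real.cos_le_one x)
  have hfactor : Vsph k b c x = Fsph x * (b * k - 2 * k ^ 2
      + (3 / 2 * k ^ 2 * (1 + Real.cos x) + c ^ 2 / 2 * (1 + Real.cos x)⁻¹)) := by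
    unfold Vsph Gsph Psph Fsph
    rw [Real.sin_sq, div_eq_mul_inv]
    ring
  have hrest : 0 ≤ 3 / 2 * k ^ 2 * (1 + Real.cos x) + c ^ 2 / 2 * (1 + Real.cos x)⁻¹ := by
    positivity
  calc -((|b * k| + 2 * k ^ 2) * Fsph x) = Fsph x * (-|b * k| - 2 * k ^ 2) := by ring
    _ ≤ Vsph k b c x := by
      rw [hfactor]
      exact mul_le_mul_of_nonneg_left (by linarith [neg_abs_le (b * k)]) hF

lemma admissiblePotentials_sphere (k b c : ℝ) {μ : ℝ} (hμ : 0 < μ) :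
    AdmissiblePotentials (fun x => μ * Fsph x) (Vsph k b c) (Ioo (-Real.pi) Real.pi)
      (μ / 2) ((|b * k| + 2 * k ^ 2) / μ) where
  isBounded := Metric.isBounded_Ioo _ _
  zero_mem := ⟨neg_neg_of_pos Real.pi_pos, Real.pi_pos⟩
  differentiableAt_U _ _ := differentiableAt_Fsph.const_mul μ
  differentiableAt_V _ hx := differentiableAt_Vsph k b c hx
  U_zero := by simp [Fsph]
  V_zero := by simp [Vsph, Gsph, Psph, Fsph]
  U_pos _ hx hx0 := mul_pos hμ (Fsph_pos_of_mem_Ioo hx hx0)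
  U_le_mul_sq x _ := by
    have hF : Fsph x ≤ x ^ 2 / 2 := by
      unfold Fsph
      linarith [Real.one_sub_sq_div_two_le_cos (x := x)]
    linarith [mul_le_mul_of_nonneg_left hF hμ.le]
  C_nonneg := by positivity
  neg_mul_U_le_V x hx := by
    rw [← mul_assoc, div_mul_cancel₀ _ hμ.ne']
    exact neg_mul_Fsph_le_Vsph k b c hx

end Sphere

theorem stmt9_general {U V s : ℝ → ℝ} {J : Set ℝ} {A C : ℝ}
    (hP : AdmissiblePotentials U V J A C) (hS : IsRadialSolution U V J s)
    (hs0 : Tendsto s (𝓝[>] 0) (𝓝 0))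
    (hlim : Tendsto (fun a => a * deriv s a) (𝓝[>] 0) (𝓝 0))
    (hnontriv : ∃ a > 0, s a ≠ 0) :
    (∀ a > 0, s a ≠ 0) ∧ 0 < liminf (fun a => |s a|) atTop := by
  have hE0 := hP.tendsto_radialEnergy_zero hs0 hlim
  have hne : ∀ a > 0, s a ≠ 0 := fun _ ha => hS.ne_zero hP hE0 hnontriv ha
  obtain ⟨ε, hε, hεs⟩ := hS.exists_eventually_le_abs hP
    (hS.radialEnergy_neg hP hE0 one_pos (hne 1 one_pos))
  exact ⟨hne, hε.trans_le
    (le_liminf_of_le (hS.isBoundedUnder_abs hP.isBounded).isCoboundedUnder_ge hεs)⟩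

/-- Sphere case, `c ≠ 0`, `μ > 0`: a nontrivial solution of the reduced radial equation
(4.24) on `[0,∞)` with `s(0) = 0` and `a s′(a) → 0` never returns to `0`, and
`liminf_{a→∞} |s(a)| > 0`. -/
theorem stmt9 (k b c μ : ℝ) (hc : c ≠ 0) (hμ : 0 < μ) (s : ℝ → ℝ)
    (hcont : ContinuousOn s (Ici 0))
    (hrange : ∀ a ∈ Ici (0:ℝ), s a ∈ Ioo (-Real.pi) Real.pi)
    (hdiff : ∀ a > (0:ℝ), DifferentiableAt ℝ s a ∧ DifferentiableAt ℝ (deriv s) a)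
    (hode : ∀ a > (0:ℝ),
      deriv (deriv s) a + deriv s a / a - μ * Real.sin (s a)
        + deriv (Vsph k b c) (s a) / a ^ 2 = 0)
    (hs0 : s 0 = 0)
    (hlim : Tendsto (fun a => a * deriv s a) (nhdsWithin 0 (Ioi 0)) (nhds 0))
    (hnontriv : ∃ a > (0:ℝ), s a ≠ 0) :
    (∀ a > (0:ℝ), s a ≠ 0) ∧ 0 < Filter.liminf (fun a => |s a|) atTop := by
  have hS : IsRadialSolution (fun x => μ * Fsph x) (Vsph k b c) (Ioo (-Real.pi) Real.pi) s :=
    ⟨fun a ha => hrange a (le_of_lt ha), fun a ha => (hdiff a ha).1, fun a ha => (hdiff a ha).2,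
      fun a ha => by simpa [deriv_const_mul, differentiableAt_Fsph, deriv_Fsph] using hode a ha⟩
  have hs_zero : Tendsto s (𝓝[>] 0) (𝓝 0) := by
    simpa only [ContinuousWithinAt, hs0] using (hcont 0 self_mem_Ici).mono Ioi_subset_Ici_self
  exact stmt9_general (admissiblePotentials_sphere k b c hμ) hS hs_zero hlim hnontriv
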